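/- Let X be a pospace and let f, u, u', v, v' be dipaths in X with u(1) = u'(1) = f(0), v(0) = v'(0) = f(1), u(0) = u'(0) and v(1) = v'(1). If ⟨u⟩ ⋆ ⟨f⟩ ⋆ ⟨v⟩ = ⟨u'⟩ ⋆ ⟨f⟩ ⋆ ⟨v'⟩ as traces, then ⟨u⟩ = ⟨u'⟩ and ⟨v⟩ = ⟨v'⟩. In other words, between any two traces of a pospace there is at most one extension, so the factorization category of the trace category of X is a poset, isomorphic to the trace poset tpos(X). -/

import Mathlib

open unitInterval

noncomputable section

/-- A reparametrization of the unit interval: continuous, monotone, fixing the endpoints. -/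
def IsReparam (φ : unitInterval → unitInterval) : Prop :=
  Continuous φ ∧ Monotone φ ∧ φ 0 = 0 ∧ φ 1 = 1

/-- Reparametrization equivalence of paths. -/
def ReparamEquiv {X : Type*} (f g : unitInterval → X) : Prop :=
  ∃ φ ψ : unitInterval → unitInterval, IsReparam φ ∧ IsReparam ψ ∧ f ∘ φ = g ∘ ψ

/-- A dipath in a pospace: a continuous monotone map `[0,1] → X`. -/
def IsDipath {X : Type*} [TopologicalSpace X] [Preorder X] (p : unitInterval → X) : Prop :=
  Continuous p ∧ Monotone p

/-- Concatenation of paths: `f` (rescaled) on `[0,1/2]`, `g` (rescaled) on `[1/2,1]`. -/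
def concatFun {X : Type*} (f g : unitInterval → X) : unitInterval → X :=
  fun t => if (t : ℝ) ≤ 1 / 2 then f (Set.projIcc 0 1 zero_le_one (2 * (t : ℝ)))
    else g (Set.projIcc 0 1 zero_le_one (2 * (t : ℝ) - 1))

/-- Traces: paths up to reparametrization equivalence. -/
def Trace (X : Type*) : Type _ := Quot (ReparamEquiv (X := X))

/-- The trace of a path. -/
def trc {X : Type*} (f : unitInterval → X) : Trace X := Quot.mk _ f

/-!
The trace of a dipath in a pospace is determined by its image. If dipaths `f` and `g` have the same
image, then for every `x` the intermediate value theorem yields `s` and `t` with mean `x` and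
`f s = g t`. Taking `s` as large as possible makes `s` and `t` monotone in `x`; as their sum is
`2 * x`, neither can jump, so they are reparametrizations.

The images of `f` and `g` are the parts of the image of `f ⋆ g` below and above the junction point.
Hence a concatenation with prescribed junction point determines the traces of both factors, and
applying this to `(u ⋆ f) ⋆ v` and then to `u ⋆ f` gives the theorem.
-/

open Set

section Reparam

theorem continuous_of_monotone_of_continuous_add {α : Type*} [LinearOrder α] [TopologicalSpace α]
    {φ ψ : α → ℝ} (hφ : Monotone φ) (hψ : Monotone ψ) (hadd : Continuous (φ + ψ)) :
    Continuous φ := by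
  have abs_sub_le (x y : α) : |φ x - φ y| ≤ |(φ + ψ) x - (φ + ψ) y| := by
    simp only [Pi.add_apply]
    rcases le_total x y with hxy | hyx
    · have hφxy := hφ hxy
      have hψxy := hψ hxy
      rw [abs_of_nonpos (by linarith), abs_of_nonpos (by linarith)]
      linarith
    · have hφyx := hφ hyx
      have hψyx := hψ hyx
      rw [abs_of_nonneg (by linarith), abs_of_nonneg (by linarith)]
      linarith
  refine continuous_iff_continuousAt.2 fun y ↦ tendsto_iff_dist_tendsto_zero.2 ?_
  exact squeeze_zero (fun _ ↦ dist_nonneg) (fun x ↦ abs_sub_le x y)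
    (tendsto_iff_dist_tendsto_zero.1 hadd.continuousAt)

theorem isReparam_of_add_eq_two_mul {φ ψ : I → I} (hφ : Monotone φ) (hψ : Monotone ψ)
    (hadd : ∀ x, (φ x : ℝ) + ψ x = 2 * x) : IsReparam φ := by
  have hcont : Continuous fun x ↦ (φ x : ℝ) + ψ x := by
    simp only [hadd]
    fun_prop
  refine ⟨continuous_induced_rng.2
    (continuous_of_monotone_of_continuous_add (Subtype.mono_coe _ |>.comp hφ)
      (Subtype.mono_coe _ |>.comp hψ) hcont), hφ, Subtype.ext ?_, Subtype.ext ?_⟩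
  · have hadd₀ : (φ 0 : ℝ) + ψ 0 = 2 * 0 := hadd 0
    change (φ 0 : ℝ) = 0
    linarith [nonneg (φ 0), nonneg (ψ 0)]
  · have hadd₁ : (φ 1 : ℝ) + ψ 1 = 2 * 1 := hadd 1
    change (φ 1 : ℝ) = 1
    linarith [le_one (φ 1), le_one (ψ 1)]

theorem IsReparam.surjective {φ : I → I} (hφ : IsReparam φ) : Function.Surjective φ := by
  obtain ⟨hcont, -, h₀, h₁⟩ := hφ
  intro y
  exact mem_range_of_exists_le_of_exists_ge hcont ⟨0, h₀.trans_le unitInterval.nonneg'⟩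
    ⟨1, unitInterval.le_one'.trans_eq h₁.symm⟩

variable {X : Type*} {f g : I → X}

theorem ReparamEquiv.range_eq (h : ReparamEquiv f g) : range f = range g := by
  obtain ⟨φ, ψ, hφ, hψ, hcomp⟩ := h
  rw [← hφ.surjective.range_comp f, hcomp, hψ.surjective.range_comp g]

theorem range_eq_of_trc_eq (h : trc f = trc g) : range f = range g :=
  congrArg (Quot.lift range fun _ _ ↦ ReparamEquiv.range_eq) h

end Reparam

section Coincidence

variable {X : Type*}

theorem exists_eq_of_forall_le_or_le {α : Type*} [TopologicalSpace α] [PreconnectedSpace α]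
    [TopologicalSpace X] [PartialOrder X] [OrderClosedTopology X] {F G : α → X}
    (hF : Continuous F) (hG : Continuous G) (hcomp : ∀ a, F a ≤ G a ∨ G a ≤ F a)
    (hle : ∃ a, F a ≤ G a) (hge : ∃ a, G a ≤ F a) : ∃ a, F a = G a := by
  obtain ⟨a, -, hFG, hGF⟩ := isPreconnected_closed_iff.1 isPreconnected_univ _ _
    (isClosed_le hF hG) (isClosed_le hG hF) (fun a _ ↦ hcomp a)
    (by rwa [univ_inter]) (by rwa [univ_inter])
  exact ⟨a, le_antisymm hFG hGF⟩

theorem range_subset_Icc_zero_one [Preorder X] {f : I → X} (hf : Monotone f) :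
    range f ⊆ Icc (f 0) (f 1) :=
  range_subset_iff.2 fun t ↦ ⟨hf (nonneg t), hf (le_one t)⟩

/-- The pairs of times with mean `x` at which the paths `f` and `g` agree. They are used to
parametrize `f` and `g` simultaneously by the mean time. -/
def coincidences (f g : I → X) (x : I) : Set (I × I) :=
  {p | (p.1 : ℝ) + p.2 = 2 * x ∧ f p.1 = g p.2}

theorem coincidences_nonempty [TopologicalSpace X] [PartialOrder X] [OrderClosedTopology X]
    {f g : I → X} (hf : IsDipath f) (hg : IsDipath g) (hrange : range f = range g) (x : I) :
    (coincidences f g x).Nonempty := by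
  have hf_mem (s : I) : f s ∈ Icc (g 0) (g 1) :=
    range_subset_Icc_zero_one hg.2 (hrange ▸ mem_range_self s)
  have hg_mem (t : I) : g t ∈ Icc (f 0) (f 1) :=
    range_subset_Icc_zero_one hf.2 (hrange ▸ mem_range_self t)
  have hcomp (s t : I) : f s ≤ g t ∨ g t ≤ f s :=
    hf.2.isChain_range.total (mem_range_self s) (hrange ▸ mem_range_self t)
  -- The pairs with mean `x` are the `(x + e, x - e)` with `|e| ≤ m`.
  let m : ℝ := min x (1 - x)
  have hmx : m ≤ x := min_le_left _ _
  have hmx' : m ≤ 1 - x := min_le_right _ _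
  have hm : -m ≤ m := neg_le_self (le_min (nonneg x) (one_minus_nonneg x))
  let s (e : Icc (-m) m) : I := ⟨x + e, by linarith [e.2.1], by linarith [e.2.2]⟩
  let t (e : Icc (-m) m) : I := ⟨x - e, by linarith [e.2.2], by linarith [e.2.1]⟩
  have hs : Continuous s := by fun_prop
  have ht : Continuous t := by fun_prop
  have : PreconnectedSpace (Icc (-m) m) := Subtype.preconnectedSpace isPreconnected_Icc
  obtain ⟨e, he⟩ : ∃ e, f (s e) = g (t e) := by
    refine exists_eq_of_forall_le_or_le (hf.1.comp hs) (hg.1.comp ht) (fun e ↦ hcomp _ _)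
      ⟨⟨-m, left_mem_Icc.2 hm⟩, ?_⟩ ⟨⟨m, right_mem_Icc.2 hm⟩, ?_⟩
    all_goals rcases min_choice (x : ℝ) (1 - x) with hmin | hmin
    · have hs₀ : s ⟨-m, left_mem_Icc.2 hm⟩ = 0 := Subtype.ext (by simp [s, m, hmin])
      simpa only [Function.comp_apply, hs₀] using (hg_mem _).1
    · have ht₁ : t ⟨-m, left_mem_Icc.2 hm⟩ = 1 := Subtype.ext (by simp [t, m, hmin])
      simpa only [Function.comp_apply, ht₁] using (hf_mem _).2
    · have ht₀ : t ⟨m, right_mem_Icc.2 hm⟩ = 0 := Subtype.ext (by simp [t, m, hmin])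
      simpa only [Function.comp_apply, ht₀] using (hf_mem _).1
    · have hs₁ : s ⟨m, right_mem_Icc.2 hm⟩ = 1 := Subtype.ext (by simp [s, m, hmin])
      simpa only [Function.comp_apply, hs₁] using (hg_mem _).2
  refine ⟨(s e, t e), ?_, he⟩
  change (x + e : ℝ) + (x - e) = 2 * x
  ring

theorem isCompact_coincidences [TopologicalSpace X] [T2Space X] {f g : I → X}
    (hf : Continuous f) (hg : Continuous g) (x : I) : IsCompact (coincidences f g x) :=
  ((isClosed_eq (by fun_prop) continuous_const).inter
    (isClosed_eq (hf.comp continuous_fst) (hg.comp continuous_snd))).isCompact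

theorem le_of_isMaxOn_fst_coincidences [PartialOrder X] {f g : I → X} (hf : Monotone f)
    (hg : Monotone g) {x y : I} (hxy : x ≤ y) {p q : I × I} (hp : p ∈ coincidences f g x)
    (hq : q ∈ coincidences f g y) (hpmax : IsMaxOn Prod.fst (coincidences f g x) p)
    (hqmax : IsMaxOn Prod.fst (coincidences f g y) q) : p ≤ q := by
  obtain ⟨s, t⟩ := p
  obtain ⟨s', t'⟩ := q
  obtain ⟨hst : (s : ℝ) + t = 2 * x, hfg : f s = g t⟩ := hp
  obtain ⟨hst' : (s' : ℝ) + t' = 2 * y, hfg' : f s' = g t'⟩ := hq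
  have hxy : (x : ℝ) ≤ y := hxy
  -- If either inequality failed, `f` and `g` would be constant and equal on the rectangle with
  -- corners `p` and `q`, which would contain a coincidence contradicting the choice of `p` or `q`.
  refine ⟨le_of_not_gt fun hs : (s' : ℝ) < s ↦ ?_, le_of_not_gt fun ht : (t' : ℝ) < t ↦ ?_⟩
  · let r : I := ⟨2 * y - s, by linarith [nonneg t], by linarith [le_one t']⟩
    have htr : t ≤ r := by change (t : ℝ) ≤ 2 * y - s; linarith
    have hrt' : r ≤ t' := by change 2 * y - s ≤ (t' : ℝ); linarith
    have hfr : f s = g r :=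
      le_antisymm (hfg.trans_le (hg htr)) ((hg hrt').trans (hfg'.symm.trans_le (hf hs.le)))
    have hmem : (s, r) ∈ coincidences f g y := ⟨add_sub_cancel _ _, hfr⟩
    exact hs.not_ge (hqmax hmem)
  · let r : I := ⟨2 * x - t', by linarith [nonneg s], by linarith [le_one s']⟩
    have hsr : (s : ℝ) < r := by change (s : ℝ) < 2 * x - t'; linarith
    have hrs' : r ≤ s' := by change 2 * x - t' ≤ (s' : ℝ); linarith
    have hfr : f r = g t' :=
      le_antisymm ((hf hrs').trans_eq hfg') ((hg ht.le).trans (hfg.symm.trans_le (hf hsr.le)))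
    have hmem : (r, t') ∈ coincidences f g x := ⟨sub_add_cancel _ _, hfr⟩
    exact hsr.not_ge (hpmax hmem)

theorem trc_eq_of_range_eq [TopologicalSpace X] [PartialOrder X] [OrderClosedTopology X]
    {f g : I → X} (hf : IsDipath f) (hg : IsDipath g) (hrange : range f = range g) :
    trc f = trc g := by
  have exists_max (x : I) := (isCompact_coincidences hf.1 hg.1 x).exists_isMaxOn
    (coincidences_nonempty hf hg hrange x) continuous_fst.continuousOn
  choose p hp hpmax using exists_max
  have hmono : Monotone p := fun x y hxy ↦
    le_of_isMaxOn_fst_coincidences hf.2 hg.2 hxy (hp x) (hp y) (hpmax x) (hpmax y)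
  have hfst : Monotone fun x ↦ (p x).1 := monotone_fst.comp hmono
  have hsnd : Monotone fun x ↦ (p x).2 := monotone_snd.comp hmono
  exact Quot.sound ⟨_, _, isReparam_of_add_eq_two_mul hfst hsnd fun x ↦ (hp x).1,
    isReparam_of_add_eq_two_mul hsnd hfst fun x ↦ (add_comm _ _).trans (hp x).1,
    funext fun x ↦ (hp x).2⟩

end Coincidence

section Concat

variable {X : Type*}

theorem concatFun_of_le_half (f g : I → X) {t : I} (ht : (t : ℝ) ≤ 1 / 2) :
    concatFun f g t = f (projIcc 0 1 zero_le_one (2 * (t : ℝ))) :=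
  if_pos ht

theorem concatFun_of_half_lt (f g : I → X) {t : I} (ht : 1 / 2 < (t : ℝ)) :
    concatFun f g t = g (projIcc 0 1 zero_le_one (2 * (t : ℝ) - 1)) :=
  if_neg ht.not_ge

theorem concatFun_one (f g : I → X) : concatFun f g 1 = g 1 := by
  rw [concatFun_of_half_lt f g (by norm_num), projIcc_of_right_le _ (by norm_num)]
  rfl

theorem concatFun_of_half_le {f g : I → X} (hfg : f 1 = g 0) {t : I} (ht : 1 / 2 ≤ (t : ℝ)) :
    concatFun f g t = g (projIcc 0 1 zero_le_one (2 * (t : ℝ) - 1)) := by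
  rcases ht.eq_or_lt with ht | ht
  · rw [concatFun_of_le_half f g ht.ge, ← ht, projIcc_of_right_le _ (by norm_num),
      projIcc_of_le_left _ (by norm_num)]
    exact hfg
  · exact concatFun_of_half_lt f g ht

theorem range_concatFun {f g : I → X} (hfg : f 1 = g 0) :
    range (concatFun f g) = range f ∪ range g := by
  refine subset_antisymm (range_subset_iff.2 fun t ↦ ?_)
    (union_subset (range_subset_iff.2 fun t ↦ ?_) (range_subset_iff.2 fun t ↦ ?_))
  · rcases le_total (t : ℝ) (1 / 2) with ht | ht
    · exact Or.inl ⟨_, (concatFun_of_le_half f g ht).symm⟩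
    · exact Or.inr ⟨_, (concatFun_of_half_le hfg ht).symm⟩
  · refine ⟨⟨t / 2, by linarith [nonneg t], by linarith [le_one t]⟩, ?_⟩
    rw [concatFun_of_le_half f g (by linarith [le_one t]), mul_div_cancel₀ _ two_ne_zero,
      projIcc_val]
  · refine ⟨⟨(t + 1) / 2, by linarith [nonneg t], by linarith [le_one t]⟩, ?_⟩
    rw [concatFun_of_half_le hfg (by linarith [nonneg t]), mul_div_cancel₀ _ two_ne_zero,
      add_sub_cancel_right, projIcc_val]

theorem continuous_concatFun [TopologicalSpace X] {f g : I → X} (hf : Continuous f)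
    (hg : Continuous g) (hfg : f 1 = g 0) : Continuous (concatFun f g) := by
  refine Continuous.if_le (hf.comp (continuous_projIcc.comp (by fun_prop)))
    (hg.comp (continuous_projIcc.comp (by fun_prop))) (by fun_prop) continuous_const fun t ht ↦ ?_
  rw [← concatFun_of_le_half f g ht.le, concatFun_of_half_le hfg ht.ge]

theorem monotone_concatFun [Preorder X] {f g : I → X} (hf : Monotone f) (hg : Monotone g)
    (hfg : f 1 = g 0) : Monotone (concatFun f g) := by
  intro s t hst
  have hst' : (s : ℝ) ≤ t := hst
  rcases le_total (t : ℝ) (1 / 2) with ht | ht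
  · rw [concatFun_of_le_half f g (hst'.trans ht), concatFun_of_le_half f g ht]
    exact hf (monotone_projIcc _ (by linarith))
  rcases le_total (s : ℝ) (1 / 2) with hs | hs
  · rw [concatFun_of_le_half f g hs, concatFun_of_half_le hfg ht]
    calc f _ ≤ f 1 := hf (le_one _)
      _ = g 0 := hfg
      _ ≤ g _ := hg (nonneg _)
  · rw [concatFun_of_half_le hfg hs, concatFun_of_half_le hfg ht]
    exact hg (monotone_projIcc _ (by linarith))

theorem IsDipath.concatFun [TopologicalSpace X] [Preorder X] {f g : I → X} (hf : IsDipath f)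
    (hg : IsDipath g) (hfg : f 1 = g 0) : IsDipath (concatFun f g) :=
  ⟨continuous_concatFun hf.1 hg.1 hfg, monotone_concatFun hf.2 hg.2 hfg⟩

theorem range_concatFun_inter_Iic [PartialOrder X] {f g : I → X} (hf : Monotone f)
    (hg : Monotone g) (hfg : f 1 = g 0) : range (concatFun f g) ∩ Iic (g 0) = range f := by
  rw [range_concatFun hfg]
  refine subset_antisymm ?_ fun x hx ↦
    ⟨Or.inl hx, hfg ▸ (range_subset_Icc_zero_one hf hx).2⟩
  rintro x ⟨hxf | hxg, hx⟩
  · exact hxf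
  · exact ⟨1, hfg.trans (le_antisymm (range_subset_Icc_zero_one hg hxg).1 hx)⟩

theorem range_concatFun_inter_Ici [PartialOrder X] {f g : I → X} (hf : Monotone f)
    (hg : Monotone g) (hfg : f 1 = g 0) : range (concatFun f g) ∩ Ici (g 0) = range g := by
  rw [range_concatFun hfg]
  refine subset_antisymm ?_ fun x hx ↦ ⟨Or.inr hx, (range_subset_Icc_zero_one hg hx).1⟩
  rintro x ⟨hxf | hxg, hx⟩
  · exact ⟨0, le_antisymm hx (hfg ▸ (range_subset_Icc_zero_one hf hxf).2)⟩
  · exact hxg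

theorem trc_eq_and_trc_eq_of_trc_concatFun_eq [TopologicalSpace X] [PartialOrder X]
    [OrderClosedTopology X] {f f' g g' : I → X} (hf : IsDipath f) (hf' : IsDipath f')
    (hg : IsDipath g) (hg' : IsDipath g') (hfg : f 1 = g 0) (hfg' : f' 1 = g' 0)
    (hjunction : g 0 = g' 0) (h : trc (concatFun f g) = trc (concatFun f' g')) :
    trc f = trc f' ∧ trc g = trc g' := by
  have hrange := range_eq_of_trc_eq h
  constructor
  · apply trc_eq_of_range_eq hf hf'
    rw [← range_concatFun_inter_Iic hf.2 hg.2 hfg, hrange, hjunction,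
      range_concatFun_inter_Iic hf'.2 hg'.2 hfg']
  · apply trc_eq_of_range_eq hg hg'
    rw [← range_concatFun_inter_Ici hf.2 hg.2 hfg, hrange, hjunction,
      range_concatFun_inter_Ici hf'.2 hg'.2 hfg']

end Concat

/-- In a pospace `X`, extensions between traces are unique: if `f, u, u', v, v'`
are dipaths with `u(1) = u'(1) = f(0)`, `v(0) = v'(0) = f(1)`, `u(0) = u'(0)`, `v(1) = v'(1)`,
and `⟨u⟩ ⋆ ⟨f⟩ ⋆ ⟨v⟩ = ⟨u'⟩ ⋆ ⟨f⟩ ⋆ ⟨v'⟩` as traces, then `⟨u⟩ = ⟨u'⟩` and `⟨v⟩ = ⟨v'⟩`.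
(Hence the factorization category of the trace category of `X` is a poset, the trace poset.) -/
theorem extension_unique
    {X : Type*} [TopologicalSpace X] [PartialOrder X] [T2Space X] [OrderClosedTopology X]
    (f u u' v v' : unitInterval → X)
    (hf : IsDipath f) (hu : IsDipath u) (hu' : IsDipath u')
    (hv : IsDipath v) (hv' : IsDipath v')
    (hu1 : u 1 = f 0) (hu'1 : u' 1 = f 0)
    (hv0 : v 0 = f 1) (hv'0 : v' 0 = f 1)
    (hu0 : u 0 = u' 0) (hv1 : v 1 = v' 1)
    (h : trc (concatFun (concatFun u f) v) = trc (concatFun (concatFun u' f) v')) :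
    trc u = trc u' ∧ trc v = trc v' := by
  have hjoin : concatFun u f 1 = v 0 := (concatFun_one u f).trans hv0.symm
  have hjoin' : concatFun u' f 1 = v' 0 := (concatFun_one u' f).trans hv'0.symm
  obtain ⟨huf, hvv'⟩ := trc_eq_and_trc_eq_of_trc_concatFun_eq (hu.concatFun hf hu1)
    (hu'.concatFun hf hu'1) hv hv' hjoin hjoin' (hv0.trans hv'0.symm) h
  exact ⟨(trc_eq_and_trc_eq_of_trc_concatFun_eq hu hu' hf hf hu1 hu'1 rfl huf).1, hvv'⟩

end
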